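/- Let K be a field, let V be a K-vector space of finite dimension n, let ω be a nonzero alternating n-linear form on V, and for 0 ≤ k ≤ n let Φ_k : ⋀^{n−k} V → Alt^k(V; K) be the contraction isomorphism determined by Φ_k(v₁ ∧ … ∧ v_{n−k})(w₁, …, w_k) = ω(v₁, …, v_{n−k}, w₁, …, w_k). For a p-form F and a q-form G with p + q ≥ n, define the co-exterior product F • G := Φ_{p+q−n}(Φ_p⁻¹(F) ∧ Φ_q⁻¹(G)), where ∧ is the exterior product in the exterior algebra of V. Then: (i) F • G = (−1)^{(n−p)(n−q)} G • F for all p-forms F and q-forms G with p + q ≥ n; and (ii) ω is a two-sided unit, i.e. ω • F = F = F • ω for every p-form F. -/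

import Mathlib

/-!
Each `Φ k` is injective, so both claims can be checked on multivectors, where `•` becomes the
exterior product. There (i) is the graded commutativity of the exterior algebra
(`exteriorPower_mul_comm`), because `Φ_p⁻¹ F` and `Φ_q⁻¹ G` have degrees `n - p` and `n - q`;
and (ii) holds because `ω = Φ_n(1)` (`coe_contraction_symm_volume`), where `1` is the unit of the
exterior algebra.

The degrees `p + q - n`, `q + p - n`, `n + q - n`, … are equal but not definitionally so.
`eq_smul_domDomCongr` performs the transport between them once: it compares forms of equal degree
through the underlying elements of the exterior algebra, whose type does not mention the degree.
-/

/-- The decomposable element `v₁ ∧ … ∧ v_k` of the `k`-th exterior power `⋀[K]^k V`. -/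
noncomputable def wedgeOfFamily (K : Type*) {V : Type*} [Field K] [AddCommGroup V] [Module K V]
    (k : ℕ) (v : Fin k → V) : ⋀[K]^k V :=
  ⟨ExteriorAlgebra.ιMulti K k v, ExteriorAlgebra.ιMulti_range K k (Set.mem_range_self v)⟩

/-- Moving a vector past a multivector of degree `a` costs the sign `(-1) ^ a`. -/
theorem ι_mul_exteriorPower {K V : Type*} [Field K] [AddCommGroup V] [Module K V]
    (a : ℕ) (m : V) {x : ExteriorAlgebra K V} (hx : x ∈ ⋀[K]^a V) :
    ExteriorAlgebra.ι K m * x = ((-1 : K) ^ a) • (x * ExteriorAlgebra.ι K m) := by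
  induction hx using Submodule.pow_induction_on_left' with
  | algebraMap r => simp [Algebra.commutes]
  | add x y i hx hy ihx ihy => rw [mul_add, add_mul, smul_add, ihx, ihy]
  | mem_mul u hu i x hx ih =>
    obtain ⟨u, rfl⟩ := hu
    have h : ExteriorAlgebra.ι K m * ExteriorAlgebra.ι K u
        = -(ExteriorAlgebra.ι K u * ExteriorAlgebra.ι K m) :=
      eq_neg_of_add_eq_zero_left (ExteriorAlgebra.ι_add_mul_swap m u)
    rw [← mul_assoc, h, neg_mul, mul_assoc, ih, mul_smul_comm, ← mul_assoc, pow_succ, mul_neg_one,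
      neg_smul]

/-- Graded commutativity of the exterior algebra. -/
theorem exteriorPower_mul_comm {K V : Type*} [Field K] [AddCommGroup V] [Module K V]
    (a b : ℕ) {x y : ExteriorAlgebra K V} (hx : x ∈ ⋀[K]^a V) (hy : y ∈ ⋀[K]^b V) :
    x * y = ((-1 : K) ^ (a * b)) • (y * x) := by
  induction hx using Submodule.pow_induction_on_left' with
  | algebraMap r => simp [Algebra.commutes]
  | add x z i hx hz ihx ihz => rw [mul_add, add_mul, smul_add, ihx, ihz]
  | mem_mul u hu i x hx ih =>
    obtain ⟨u, rfl⟩ := hu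
    rw [mul_assoc, ih, mul_smul_comm, ← mul_assoc, ι_mul_exteriorPower b u hy, smul_mul_assoc,
      smul_smul, ← pow_add, mul_assoc, Nat.succ_mul]

/-- Two forms of equal degree `k = l` are proportional as soon as the multivectors representing
them are proportional in the exterior algebra. -/
theorem eq_smul_domDomCongr {K V : Type*} [Field K] [AddCommGroup V] [Module K V] {n : ℕ}
    (Φ : (k : ℕ) → k ≤ n → (⋀[K]^(n - k) V ≃ₗ[K] (V [⋀^Fin k]→ₗ[K] K)))
    {k l : ℕ} (hk : k ≤ n) (hl : l ≤ n) (h : l = k) (c : K)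
    (F : V [⋀^Fin k]→ₗ[K] K) (G : V [⋀^Fin l]→ₗ[K] K)
    (hFG : (((Φ k hk).symm F : ⋀[K]^(n - k) V) : ExteriorAlgebra K V)
      = c • (((Φ l hl).symm G : ⋀[K]^(n - l) V) : ExteriorAlgebra K V)) :
    F = c • AlternatingMap.domDomCongr (finCongr h) G := by
  subst h
  have hG : AlternatingMap.domDomCongr (finCongr rfl) G = G := by
    ext v
    simp
  rw [hG]
  apply (Φ l hk).symm.injective
  rw [map_smul]
  exact Subtype.ext hFG

theorem ιMulti_of_eq_zero {K V : Type*} [Field K] [AddCommGroup V] [Module K V]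
    {m : ℕ} (hm : m = 0) (v : Fin m → V) : ExteriorAlgebra.ιMulti K m v = 1 := by
  subst hm
  exact ExteriorAlgebra.ιMulti_zero_apply v

/-- The volume form is the contraction of the empty wedge: `Φ_n⁻¹ ω = 1`. -/
theorem coe_contraction_symm_volume {K V : Type*} [Field K] [AddCommGroup V] [Module K V] {n : ℕ}
    (ω : V [⋀^Fin n]→ₗ[K] K)
    (Φ : (k : ℕ) → k ≤ n → (⋀[K]^(n - k) V ≃ₗ[K] (V [⋀^Fin k]→ₗ[K] K)))
    (hΦ : ∀ (k : ℕ) (hk : k ≤ n) (v : Fin (n - k) → V) (w : Fin k → V),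
      Φ k hk (wedgeOfFamily K (n - k) v) w
        = ω (fun i => Fin.append v w (Fin.cast (Nat.sub_add_cancel hk).symm i))) :
    (((Φ n le_rfl).symm ω : ⋀[K]^(n - n) V) : ExteriorAlgebra K V) = 1 := by
  have h : Φ n le_rfl (wedgeOfFamily K (n - n) 0) = ω := by
    ext w
    rw [hΦ]
    congr 1
    funext i
    -- as `n - n = 0`, every index of the concatenated family lies in its second block
    have hi : Fin.cast (Nat.sub_add_cancel le_rfl).symm i = Fin.natAdd (n - n) i := by
      ext
      simp
    rw [hi, Fin.append_right]
  rw [(LinearEquiv.symm_apply_eq _).mpr h.symm]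
  exact ιMulti_of_eq_zero (Nat.sub_self n) _

theorem coexterior_product_graded_comm_and_unit
    (K V : Type*) [Field K] [AddCommGroup V] [Module K V] [FiniteDimensional K V]
    (n : ℕ) (hdim : Module.finrank K V = n)
    (ω : V [⋀^Fin n]→ₗ[K] K) (hω : ω ≠ 0)
    -- the contraction isomorphisms Φ_k : ⋀^{n−k} V ≃ Alt^k(V; K)
    (Φ : (k : ℕ) → k ≤ n → (⋀[K]^(n - k) V ≃ₗ[K] (V [⋀^Fin k]→ₗ[K] K)))
    (hΦ : ∀ (k : ℕ) (hk : k ≤ n) (v : Fin (n - k) → V) (w : Fin k → V),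
      Φ k hk (wedgeOfFamily K (n - k) v) w
        = ω (fun i => Fin.append v w (Fin.cast (Nat.sub_add_cancel hk).symm i)))
    -- the co-exterior product F • G := Φ_{p+q−n}(Φ_p⁻¹(F) ∧ Φ_q⁻¹(G))
    (coext : (p q : ℕ) → p ≤ n → q ≤ n → n ≤ p + q →
      (V [⋀^Fin p]→ₗ[K] K) → (V [⋀^Fin q]→ₗ[K] K) → (V [⋀^Fin (p + q - n)]→ₗ[K] K))
    (hcoext : ∀ (p q : ℕ) (hp : p ≤ n) (hq : q ≤ n) (hpq : n ≤ p + q)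
      (F : V [⋀^Fin p]→ₗ[K] K) (G : V [⋀^Fin q]→ₗ[K] K),
      (((Φ (p + q - n) (by omega)).symm (coext p q hp hq hpq F G) : ⋀[K]^(n - (p + q - n)) V)
          : ExteriorAlgebra K V)
        = (((Φ p hp).symm F : ⋀[K]^(n - p) V) : ExteriorAlgebra K V)
          * (((Φ q hq).symm G : ⋀[K]^(n - q) V) : ExteriorAlgebra K V)) :
    -- (i) graded commutativity: F • G = (−1)^{(n−p)(n−q)} G • F
    (∀ (p q : ℕ) (hp : p ≤ n) (hq : q ≤ n) (hpq : n ≤ p + q)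
      (F : V [⋀^Fin p]→ₗ[K] K) (G : V [⋀^Fin q]→ₗ[K] K),
      coext p q hp hq hpq F G
        = ((-1 : K) ^ ((n - p) * (n - q))) •
            AlternatingMap.domDomCongr (finCongr (by omega : q + p - n = p + q - n))
              (coext q p hq hp (by omega) G F))
    ∧
    -- (ii) ω is a two-sided unit: ω • F = F = F • ω
    (∀ (q : ℕ) (hq : q ≤ n) (F : V [⋀^Fin q]→ₗ[K] K),
      AlternatingMap.domDomCongr (finCongr (by omega : n + q - n = q))
          (coext n q le_rfl hq (by omega) ω F) = F
        ∧
      AlternatingMap.domDomCongr (finCongr (by omega : q + n - n = q))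
          (coext q n hq le_rfl (by omega) F ω) = F) := by
  have h_one := coe_contraction_symm_volume ω Φ hΦ
  refine ⟨fun p q hp hq hpq F G => ?_, fun q hq F => ⟨?_, ?_⟩⟩
  · apply eq_smul_domDomCongr Φ (by omega) (by omega)
    rw [hcoext, hcoext]
    exact exteriorPower_mul_comm (n - p) (n - q) (Subtype.prop _) (Subtype.prop _)
  · symm
    rw [← one_smul K (AlternatingMap.domDomCongr _ _)]
    apply eq_smul_domDomCongr Φ hq (by omega)
    rw [hcoext, h_one, one_mul, one_smul]
  · symm
    rw [← one_smul K (AlternatingMap.domDomCongr _ _)]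
    apply eq_smul_domDomCongr Φ hq (by omega)
    rw [hcoext, h_one, mul_one, one_smul]
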